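/- Let ε > 0, α > 0, and suppose F₀ is a radially symmetric C² function on the closed exterior domain {|x| ≥ ε} in ℝ², decaying at infinity together with its derivatives, satisfying (1 − αΔ)F₀ = 0 on {|x| > ε} and ∂F₀/∂n̂ = A on {|x| = ε} (with n̂ = x/ε the interior normal), and let B be the (constant) value of F₀ on {|x| = ε}. Let G_α be the kernel of (1 − αΔ)^{-1} on ℝ². Then B = −α A · (∫_{{|x|=ε}} G_α ds) / (∫_{{|x| > ε}} G_α dx). -/

import Mathlib

open MeasureTheory Real Set Filter

noncomputable section

/-- Euclidean norm on `ℝ × ℝ`. -/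
def norm2 (x : ℝ × ℝ) : ℝ := Real.sqrt (x.1 ^ 2 + x.2 ^ 2)

/-- Partial derivative in the first coordinate direction. -/
def pd1 (f : ℝ × ℝ → ℝ) (x : ℝ × ℝ) : ℝ := fderiv ℝ f x (1, 0)

/-- Partial derivative in the second coordinate direction. -/
def pd2 (f : ℝ × ℝ → ℝ) (x : ℝ × ℝ) : ℝ := fderiv ℝ f x (0, 1)

/-- Laplacian. -/
def lap (f : ℝ × ℝ → ℝ) (x : ℝ × ℝ) : ℝ := pd1 (pd1 f) x + pd2 (pd2 f) x

open scoped ContDiff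

theorem eqOn_const_of_forall_integral_mul_deriv_eq_zero {q : ℝ → ℝ}
    (hq : ContinuousOn q (Ioi 0))
    (h : ∀ w : ℝ → ℝ, ContDiff ℝ ∞ w → HasCompactSupport w → tsupport w ⊆ Ioi 0 →
      ∫ s, q s * deriv w s = 0) :
    ∃ c, ∀ s, 0 < s → q s = c := by
  have hint : ∀ η : ℝ → ℝ, ContDiff ℝ ∞ η → HasCompactSupport η → tsupport η ⊆ Ioi 0 →
      Integrable (fun s => q s * η s) := by
    intro η h1 h2 h3
    have hc : Continuous (fun s => q s * η s) := by
      apply continuous_of_tsupport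
      intro x hx
      have hx' : x ∈ Ioi (0 : ℝ) := h3 (tsupport_mul_subset_right hx)
      exact (hq.continuousAt (isOpen_Ioi.mem_nhds hx')).mul h1.continuous.continuousAt
    exact hc.integrable_of_hasCompactSupport h2.mul_left
  let b : ContDiffBump (2 : ℝ) := ⟨1 / 2, 1, by norm_num, by norm_num⟩
  let ρ : ℝ → ℝ := b.normed volume
  have hρ1 : ContDiff ℝ ∞ ρ := b.contDiff_normed
  have hρ2 : HasCompactSupport ρ := b.hasCompactSupport_normed
  have hρ3 : tsupport ρ ⊆ Ioi 0 := by
    rw [b.tsupport_normed_eq]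
    intro x hx
    rw [Real.closedBall_eq_Icc] at hx
    have := hx.1
    simp only [b] at this
    rw [mem_Ioi]; linarith
  have hρ4 : ∫ s, ρ s = 1 := b.integral_normed
  refine ⟨∫ s, q s * ρ s, ?_⟩
  set c := ∫ s, q s * ρ s with hcdef
  have key : ∀ η : ℝ → ℝ, ContDiff ℝ ∞ η → HasCompactSupport η → tsupport η ⊆ Ioi 0 →
      ∫ s, q s * η s = (∫ s, η s) * c := by
    intro η h1 h2 h3
    set m := ∫ s, η s with hm
    let ψ : ℝ → ℝ := fun s => η s - m * ρ s
    have hψ1 : ContDiff ℝ ∞ ψ := h1.sub (contDiff_const.mul hρ1)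
    have hηi : Integrable η := h1.continuous.integrable_of_hasCompactSupport h2
    have hρi : Integrable ρ := hρ1.continuous.integrable_of_hasCompactSupport hρ2
    have hψi : Integrable ψ := hηi.sub (hρi.const_mul m)
    have hψ0 : ∫ s, ψ s = 0 := by
      simp only [ψ]
      rw [integral_sub hηi (hρi.const_mul m), integral_const_mul, hρ4]; simp [hm]
    have hK : IsCompact (tsupport η ∪ tsupport ρ) := h2.isCompact.union hρ2.isCompact
    have hKs : tsupport η ∪ tsupport ρ ⊆ Ioi 0 := union_subset h3 hρ3
    have hKn : (tsupport η ∪ tsupport ρ).Nonempty := by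
      refine Nonempty.inr ?_
      rw [b.tsupport_normed_eq]
      exact ⟨2, by simp [b]⟩
    obtain ⟨δ, hδ⟩ := hK.exists_isLeast hKn
    obtain ⟨M, hM⟩ := hK.exists_isGreatest hKn
    have hδ0 : 0 < δ := hKs hδ.1
    have hψz : ∀ s, s ∉ Icc δ M → ψ s = 0 := by
      intro s hs
      have : s ∉ tsupport η ∪ tsupport ρ := fun hs' => hs ⟨hδ.2 hs', hM.2 hs'⟩
      simp only [mem_union, not_or] at this
      simp [ψ, image_eq_zero_of_notMem_tsupport this.1, image_eq_zero_of_notMem_tsupport this.2]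
    let w : ℝ → ℝ := fun s => ∫ x in (0 : ℝ)..s, ψ x
    have hwd : ∀ s, HasDerivAt w (ψ s) s := fun s =>
      hψ1.continuous.integral_hasStrictDerivAt 0 s |>.hasDerivAt
    have hdw : deriv w = ψ := funext fun s => (hwd s).deriv
    have hw1 : ContDiff ℝ ∞ w := by
      rw [contDiff_infty_iff_deriv]
      exact ⟨fun s => (hwd s).differentiableAt, by rw [hdw]; exact hψ1⟩
    have hwz : ∀ s, s ∉ Icc δ M → w s = 0 := by
      intro s hs
      by_cases hsδ : s < δ
      · apply intervalIntegral.integral_zero_ae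
        refine Eventually.of_forall fun x hx => hψz x ?_
        intro hx'
        rw [mem_uIoc] at hx
        rcases hx with hx | hx <;> linarith [hx.1, hx.2, hx'.1, hx'.2]
      · have hsM : M < s := by
          by_contra hh
          exact hs ⟨not_lt.1 hsδ, not_lt.1 hh⟩
        simp only [w]
        rw [intervalIntegral.integral_eq_integral_of_support_subset, hψ0]
        intro x hx
        have : x ∈ Icc δ M := by
          by_contra hh
          exact hx (hψz x hh)
        exact ⟨by linarith [this.1], by linarith [this.2]⟩
    have hwt : tsupport w ⊆ Icc δ M := by
      apply closure_minimal _ isClosed_Icc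
      intro x hx
      by_contra hh
      exact hx (hwz x hh)
    have := h w hw1 (HasCompactSupport.intro isCompact_Icc hwz)
      (hwt.trans fun x hx => lt_of_lt_of_le hδ0 hx.1)
    rw [hdw] at this
    have e : (fun s => q s * ψ s) = fun s => q s * η s - m * (q s * ρ s) := by
      funext s; simp only [ψ]; ring
    rw [e, integral_sub (hint η h1 h2 h3) ((hint ρ hρ1 hρ2 hρ3).const_mul m),
      integral_const_mul] at this
    linarith
  have hae : ∀ᵐ x : ℝ, x ∈ Ioi (0 : ℝ) → q x - c = 0 := by
    apply isOpen_Ioi.ae_eq_zero_of_integral_contDiff_smul_eq_zero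
    · exact (hq.sub continuousOn_const).locallyIntegrableOn measurableSet_Ioi
    · intro η h1 h2 h3
      have hηi : Integrable η := h1.continuous.integrable_of_hasCompactSupport h2
      have e : (fun s => η s • (q s - c)) = fun s => q s * η s - c * η s := by
        funext s; simp only [smul_eq_mul]; ring
      rw [e, integral_sub (hint η h1 h2 h3) (hηi.const_mul c), integral_const_mul,
        key η h1 h2 h3]
      ring
  have hEq := Measure.eqOn_open_of_ae_eq (μ := volume) (U := Ioi (0 : ℝ)) (f := q)
    (g := fun _ => c) (by
      rw [EventuallyEq, ae_restrict_iff' measurableSet_Ioi]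
      filter_upwards [hae] with x hx hx0
      linarith [hx hx0]) isOpen_Ioi hq continuousOn_const
  exact fun s hs => hEq hs

theorem hasDerivAt_primitive_of_continuousOn_Ioi {f : ℝ → ℝ} {a t : ℝ}
    (hf : ContinuousOn f (Ioi 0)) (hi : IntervalIntegrable f volume a t) (ht : 0 < t) :
    HasDerivAt (fun u => ∫ x in a..u, f x) (f t) t :=
  intervalIntegral.integral_hasDerivAt_right hi
    (hf.stronglyMeasurableAtFilter isOpen_Ioi t ht)
    (hf.continuousAt (isOpen_Ioi.mem_nhds ht))

theorem kernel_hasDerivAt {G : ℝ → ℝ} {α : ℝ} (hα : 0 < α)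
    (hGi : IntegrableOn G (Ioi 0)) (hGc : ContinuousOn G (Ioi 0))
    (hw : ∀ h u : ℝ → ℝ, (∀ s, HasDerivAt h (u s) s) → ContDiff ℝ ∞ u →
      ∀ M, (∀ s, M ≤ s → h s = 0) →
        h 0 = π * ∫ s in Ioi 0, G s * (h s - 4 * α * (s * deriv u s + u s)))
    {t : ℝ} (ht : 0 < t) :
    HasDerivAt G (-((1 / π - ∫ x in (0 : ℝ)..t, G x) / (4 * α * t))) t := by
  have hπ := Real.pi_pos
  let Γ : ℝ → ℝ := fun t => ∫ x in (0 : ℝ)..t, G x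
  have hGii : ∀ t, 0 ≤ t → IntervalIntegrable G volume 0 t := fun t ht => by
    rw [intervalIntegrable_iff_integrableOn_Ioc_of_le ht]
    exact hGi.mono_set Ioc_subset_Ioi_self
  have hΓd : ∀ t, 0 < t → HasDerivAt Γ (G t) t := fun t ht =>
    hasDerivAt_primitive_of_continuousOn_Ioi hGc (hGii t ht.le) ht
  let p : ℝ → ℝ := fun t => (1 / π - Γ t) / (4 * α * t)
  have hpc : ContinuousOn p (Ioi 0) := by
    apply ContinuousOn.div
    · exact continuousOn_const.sub fun t ht => (hΓd t ht).continuousAt.continuousWithinAt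
    · fun_prop
    · intro x hx
      have : 0 < x := hx
      positivity
  let P : ℝ → ℝ := fun t => ∫ x in (1 : ℝ)..t, p x
  have hPd : ∀ t, 0 < t → HasDerivAt P (p t) t := fun t ht => by
    apply hasDerivAt_primitive_of_continuousOn_Ioi hpc _ ht
    apply (hpc.mono _).intervalIntegrable
    intro x hx
    rw [mem_uIcc] at hx
    rw [mem_Ioi]
    rcases hx with hx | hx <;> linarith [hx.1, hx.2]
  have hPc : ContinuousOn P (Ioi 0) := fun t ht => (hPd t ht).continuousAt.continuousWithinAt
  obtain ⟨c, hc⟩ := eqOn_const_of_forall_integral_mul_deriv_eq_zero (q := fun s => P s + G s)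
    (hPc.add hGc) (by
    intro w hw1 hw2 hw3
    have hw0 : ∀ s, s ≤ 0 → w s = 0 := fun s hs =>
      image_eq_zero_of_notMem_tsupport fun h => not_lt.2 hs (hw3 h)
    have hwd : ∀ s, HasDerivAt w (deriv w s) s := fun s =>
      (hw1.differentiable (by simp)).differentiableAt.hasDerivAt
    have hdwc : Continuous (deriv w) := hw1.continuous_deriv (by simp)
    have hdt : tsupport (deriv w) ⊆ tsupport w := tsupport_deriv_subset
    obtain ⟨M, hM⟩ := hw2.isCompact.bddAbove
    obtain ⟨N, hN0, hN⟩ : ∃ N : ℝ, 0 < N ∧ M < N :=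
      ⟨max M 0 + 1, by positivity, by linarith [le_max_left M 0]⟩
    have hNt : ∀ s, N ≤ s → s ∉ tsupport w := fun s hs h => by linarith [hM h]
    have hwN : ∀ s, N ≤ s → w s = 0 := fun s hs => image_eq_zero_of_notMem_tsupport (hNt s hs)
    have hdwN : ∀ s, N ≤ s → deriv w s = 0 := fun s hs =>
      image_eq_zero_of_notMem_tsupport fun h => hNt s hs (hdt h)
    have hdw0 : ∀ s, s ≤ 0 → deriv w s = 0 := fun s hs =>
      image_eq_zero_of_notMem_tsupport fun h => not_lt.2 hs (hw3 (hdt h))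
    let u : ℝ → ℝ := fun s => w s * s⁻¹
    have hu1 : ContDiff ℝ ∞ u := by
      rw [contDiff_iff_contDiffAt]
      intro x
      by_cases hx : x ∈ tsupport u
      · have hx' : x ∈ Ioi (0 : ℝ) := hw3 (tsupport_mul_subset_left hx)
        exact hw1.contDiffAt.mul (contDiffAt_inv ℝ (ne_of_gt hx'))
      · exact contDiffAt_const.congr_of_eventuallyEq (notMem_tsupport_iff_eventuallyEq.1 hx)
    have hud : ∀ s, HasDerivAt u (deriv u s) s := fun s =>
      (hu1.differentiable (by simp)).differentiableAt.hasDerivAt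
    have hwu : w = fun s => s * u s := by
      funext s
      by_cases hs : s = 0
      · simp [hs, hw0 0 le_rfl]
      · simp only [u]; field_simp
    have hdwu : ∀ s, s * deriv u s + u s = deriv w s := by
      intro s
      have := ((hasDerivAt_id s).mul (hud s)).deriv
      have e : deriv w s = deriv (id * u) s := by rw [hwu]; rfl
      rw [e, this]; simp [add_comm]
    let h : ℝ → ℝ := fun s => ∫ x in N..s, u x
    have hhd : ∀ s, HasDerivAt h (u s) s := fun s =>
      (hu1.continuous.integral_hasStrictDerivAt N s).hasDerivAt
    have hhc : Continuous h := continuous_iff_continuousAt.2 fun s => (hhd s).continuousAt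
    have hhN : ∀ s, N ≤ s → h s = 0 := by
      intro s hs
      apply intervalIntegral.integral_zero_ae
      refine Eventually.of_forall fun x hx => ?_
      rw [uIoc_of_le hs] at hx
      simp [u, hwN x hx.1.le]
    have hweak := hw h u hhd hu1 N hhN
    simp only [hdwu] at hweak
    have hset : ∫ s in Ioi 0, G s * (h s - 4 * α * deriv w s) =
        ∫ s in (0 : ℝ)..N, G s * (h s - 4 * α * deriv w s) := by
      rw [intervalIntegral.integral_of_le hN0.le]
      apply setIntegral_eq_of_subset_of_forall_sdiff_eq_zero measurableSet_Ioi
        Ioc_subset_Ioi_self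
      intro x hx
      have : N ≤ x := by
        by_contra hh
        exact hx.2 ⟨hx.1, (not_le.1 hh).le⟩
      simp [hhN x this, hdwN x this]
    rw [hset] at hweak
    have hGh : IntervalIntegrable (fun s => G s * h s) volume 0 N :=
      (hGii N hN0.le).mul_continuousOn hhc.continuousOn
    have hGw : IntervalIntegrable (fun s => G s * deriv w s) volume 0 N :=
      (hGii N hN0.le).mul_continuousOn hdwc.continuousOn
    have hPwc : ∀ v : ℝ → ℝ, Continuous v → tsupport v ⊆ tsupport w →
        Continuous fun s => P s * v s := by
      intro v hv hv'
      apply continuous_of_tsupport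
      intro x hx
      have hx' : x ∈ Ioi (0 : ℝ) := hw3 (hv' (tsupport_mul_subset_right hx))
      exact (hPc.continuousAt (isOpen_Ioi.mem_nhds hx')).mul hv.continuousAt
    have hPw : IntervalIntegrable (fun s => P s * deriv w s) volume 0 N :=
      (hPwc _ hdwc hdt).intervalIntegrable 0 N
    have hΓc : ContinuousOn Γ (Icc 0 N) := by
      have := intervalIntegral.continuousOn_primitive_interval (μ := volume) (f := G)
        (a := 0) (b := N) (by
          rw [uIcc_of_le hN0.le, integrableOn_Icc_iff_integrableOn_Ioc]
          exact hGi.mono_set Ioc_subset_Ioi_self)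
      rwa [uIcc_of_le hN0.le] at this
    have hftc := intervalIntegral.integral_eq_sub_of_hasDerivAt_of_le hN0.le
      (f := fun s => (Γ s - 1 / π) * h s + 4 * α * (P s * w s))
      (f' := fun s => G s * h s + 4 * α * (P s * deriv w s))
      (((hΓc.sub continuousOn_const).mul hhc.continuousOn).add
        (continuousOn_const.mul (hPwc w hw1.continuous subset_rfl).continuousOn))
      (by
        intro s hs
        have hs0 : 0 < s := hs.1
        have := (((hΓd s hs0).sub_const (1 / π)).mul (hhd s)).add
          (((hPd s hs0).mul (hwd s)).const_mul (4 * α))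
        refine this.congr_deriv ?_
        have e1 : 4 * α * p s * w s = (1 / π - Γ s) * u s := by
          simp only [p, u]
          field_simp
        linear_combination e1)
      (hGh.add (hPw.const_mul _))
    rw [intervalIntegral.integral_add hGh (hPw.const_mul _),
      intervalIntegral.integral_const_mul] at hftc
    have hΓ0 : Γ 0 = 0 := by simp [Γ]
    simp only [hhN N le_rfl, hwN N le_rfl, hw0 0 le_rfl, hΓ0] at hftc
    have e : (fun s => G s * (h s - 4 * α * deriv w s)) =
        fun s => G s * h s - 4 * α * (G s * deriv w s) := by
      funext s; ring
    rw [e, intervalIntegral.integral_sub hGh (hGw.const_mul _),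
      intervalIntegral.integral_const_mul] at hweak
    have hsum : 4 * α * ((∫ s in (0 : ℝ)..N, P s * deriv w s) +
        ∫ s in (0 : ℝ)..N, G s * deriv w s) = 0 := by
      have : h 0 / π = (∫ s in (0 : ℝ)..N, G s * h s) -
          4 * α * ∫ s in (0 : ℝ)..N, G s * deriv w s := by
        rw [hweak]; field_simp
      have h2 : (1 / π) * h 0 = h 0 / π := by ring
      linarith
    have hsum' := (mul_eq_zero.1 hsum).resolve_left (by positivity)
    rw [← intervalIntegral.integral_add hPw hGw,
      intervalIntegral.integral_eq_integral_of_support_subset] at hsum'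
    · simpa only [add_mul] using hsum'
    · intro x hx
      constructor
      · by_contra hh
        exact hx (by simp [hdw0 x (not_lt.1 hh)])
      · by_contra hh
        exact hx (by simp [hdwN x (not_le.1 hh).le]))
  have hGe : G =ᶠ[nhds t] fun s => c - P s := by
    filter_upwards [isOpen_Ioi.mem_nhds ht] with s hs
    have := hc s hs
    linarith
  exact ((hPd t ht).const_sub c).congr_of_eventuallyEq hGe

theorem frequently_mul_lt_of_integrableOn_Ioi {G : ℝ → ℝ}
    (hGi : IntegrableOn G (Ioi 0)) {C : ℝ} (hC : 0 < C) :
    ∃ᶠ t in atTop, t * G t < C := by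
  intro hev
  simp only [not_lt] at hev
  obtain ⟨T, hT⟩ := eventually_atTop.1 (hev.and (eventually_gt_atTop (0 : ℝ)))
  have hT0 : 0 < T := (hT T le_rfl).2
  apply not_integrableOn_Ioi_inv (a := T)
  have hi : IntegrableOn (fun t => C⁻¹ * G t) (Ioi T) :=
    (hGi.mono_set (Ioi_subset_Ioi hT0.le)).const_mul _
  refine Integrable.mono' hi measurable_inv.aestronglyMeasurable ?_
  rw [ae_restrict_iff' measurableSet_Ioi]
  refine Eventually.of_forall fun t ht => ?_
  have h1 := hT t (le_of_lt ht)
  have ht0 : 0 < t := h1.2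
  rw [Real.norm_of_nonneg (by positivity), inv_mul_eq_div, le_div_iff₀ hC, inv_mul_eq_div,
    div_le_iff₀ ht0]
  linarith [h1.1]

theorem integral_kernel_eq {G : ℝ → ℝ} {α : ℝ} (hα : 0 < α)
    (hGi : IntegrableOn G (Ioi 0)) (hpos : ∀ t, 0 < t → 0 < G t)
    (hd : ∀ t, 0 < t → HasDerivAt G (-((1 / π - ∫ x in (0 : ℝ)..t, G x) / (4 * α * t))) t) :
    ∫ x in Ioi 0, G x = 1 / π := by
  have hGc : ∀ T, 0 < T → ContinuousOn G (Ici T) := fun T hT t ht =>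
    (hd t (lt_of_lt_of_le hT ht)).continuousAt.continuousWithinAt
  rcases lt_trichotomy (∫ x in Ioi 0, G x) (1 / π) with hlt | heq | hgt
  · exfalso
    set c := (1 / π - ∫ x in Ioi 0, G x) / (4 * α) with hc
    have hc0 : 0 < c := div_pos (sub_pos.2 hlt) (by positivity)
    have hanti : AntitoneOn (fun t => G t + c * Real.log t) (Ici 1) := by
      have hder : ∀ t : ℝ, 0 < t → HasDerivAt (fun t => G t + c * Real.log t)
          (-((1 / π - ∫ x in (0 : ℝ)..t, G x) / (4 * α * t)) + c * t⁻¹) t := fun t ht =>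
        (hd t ht).add ((Real.hasDerivAt_log ht.ne').const_mul c)
      refine antitoneOn_of_deriv_nonpos (convex_Ici 1) ?_ ?_ ?_
      · exact fun t ht => (hder t (lt_of_lt_of_le one_pos ht)).continuousAt.continuousWithinAt
      · intro t ht
        rw [interior_Ici] at ht
        exact (hder t (one_pos.trans ht)).differentiableAt.differentiableWithinAt
      · intro t ht
        rw [interior_Ici] at ht
        have ht0 : 0 < t := one_pos.trans ht
        rw [(hder t ht0).deriv]
        have hle : ∫ x in (0 : ℝ)..t, G x ≤ ∫ x in Ioi 0, G x := by
          rw [intervalIntegral.integral_of_le ht0.le]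
          refine setIntegral_mono_set hGi ?_ Ioc_subset_Ioi_self.eventuallyLE
          rw [EventuallyLE, ae_restrict_iff' measurableSet_Ioi]
          exact Eventually.of_forall fun x hx => (hpos x hx).le
        have e : -((1 / π - ∫ x in (0 : ℝ)..t, G x) / (4 * α * t)) + c * t⁻¹ =
            ((∫ x in (0 : ℝ)..t, G x) - ∫ x in Ioi 0, G x) / (4 * α * t) := by
          rw [hc]; field_simp; ring
        rw [e]
        exact div_nonpos_of_nonpos_of_nonneg (by linarith) (by positivity)
    have hG1 := hpos 1 one_pos
    have he : 1 ≤ Real.exp (G 1 / c) := Real.one_le_exp (by positivity)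
    have := hanti self_mem_Ici (mem_Ici.2 he) he
    have hG2 := hpos _ (Real.exp_pos (G 1 / c))
    simp only [Real.log_exp, Real.log_one] at this
    rw [mul_div_cancel₀ _ hc0.ne'] at this
    linarith
  · exact heq
  · exfalso
    have htend := intervalIntegral_tendsto_integral_Ioi (μ := volume) (f := G) 0 hGi tendsto_id
    obtain ⟨T, hT⟩ := eventually_atTop.1
      ((htend.eventually (lt_mem_nhds hgt)).and (eventually_gt_atTop (0 : ℝ)))
    have hT0 : 0 < T := (hT T le_rfl).2
    have hmono : MonotoneOn G (Ici T) := by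
      refine monotoneOn_of_deriv_nonneg (convex_Ici T) (hGc T hT0) ?_ ?_
      · intro t ht
        rw [interior_Ici] at ht
        exact (hd t (hT0.trans ht)).differentiableAt.differentiableWithinAt
      · intro t ht
        rw [interior_Ici] at ht
        have ht0 : 0 < t := hT0.trans ht
        rw [(hd t ht0).deriv, ← neg_div]
        have := (hT t (le_of_lt ht)).1
        simp only [id] at this
        exact div_nonneg (by linarith) (by positivity)
    obtain ⟨t, ht, htT⟩ := ((frequently_mul_lt_of_integrableOn_Ioi hGi
      (mul_pos hT0 (hpos T hT0))).and_eventually (eventually_ge_atTop T)).exists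
    have := mul_le_mul htT (hmono self_mem_Ici (mem_Ici.2 htT) htT) (hpos T hT0).le
      (hT0.le.trans htT)
    linarith

theorem boundary_identity {G K K₁ K₂ : ℝ → ℝ} {α a : ℝ} (hα : 0 < α) (ha : 0 < a)
    (hGi : IntegrableOn G (Ioi 0)) (hpos : ∀ t, 0 < t → 0 < G t)
    (hd : ∀ t, 0 < t → HasDerivAt G (-((1 / π - ∫ x in (0 : ℝ)..t, G x) / (4 * α * t))) t)
    (hKc : ContinuousOn K (Ici a)) (hK₁c : ContinuousOn K₁ (Ici a))
    (hK : ∀ t, a < t → HasDerivAt K (K₁ t) t) (hK₁ : ∀ t, a < t → HasDerivAt K₁ (K₂ t) t)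
    (hode : ∀ t, a < t → K t - α * (4 * t * K₂ t + 4 * K₁ t) = 0)
    (hKlim : Tendsto K atTop (nhds 0)) (hK₁lim : Tendsto K₁ atTop (nhds 0)) :
    4 * α * a * K₁ a * G a = -(K a * ∫ x in Ioi a, G x) := by
  let Γ : ℝ → ℝ := fun t => ∫ x in (0 : ℝ)..t, G x
  have hGii : ∀ t, 0 ≤ t → IntervalIntegrable G volume 0 t := fun t ht => by
    rw [intervalIntegrable_iff_integrableOn_Ioc_of_le ht]
    exact hGi.mono_set Ioc_subset_Ioi_self
  have hGc : ContinuousOn G (Ioi 0) := fun t ht => (hd t ht).continuousAt.continuousWithinAt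
  have hΓd : ∀ t, 0 < t → HasDerivAt Γ (G t) t := fun t ht =>
    hasDerivAt_primitive_of_continuousOn_Ioi hGc (hGii t ht.le) ht
  have hmass := integral_kernel_eq hα hGi hpos hd
  have hΓlim : Tendsto Γ atTop (nhds (1 / π)) := by
    rw [← hmass]
    exact intervalIntegral_tendsto_integral_Ioi 0 hGi tendsto_id
  let W : ℝ → ℝ := fun t => 4 * α * (t * (K₁ t * G t)) + K t * (1 / π - Γ t)
  have hsub : Ici a ⊆ Ioi (0 : ℝ) := fun x hx => lt_of_lt_of_le ha hx
  have hWc : ContinuousOn W (Ici a) := by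
    have hΓc : ContinuousOn Γ (Ici a) := fun t ht =>
      (hΓd t (hsub ht)).continuousAt.continuousWithinAt
    exact (continuousOn_const.mul (continuousOn_id.mul (hK₁c.mul (hGc.mono hsub)))).add
      (hKc.mul (continuousOn_const.sub hΓc))
  have hWd : ∀ t, a < t → HasDerivAt W 0 t := by
    intro t ht
    have ht0 : 0 < t := ha.trans ht
    have := (((hasDerivAt_id t).mul ((hK₁ t ht).mul (hd t ht0))).const_mul (4 * α)).add
      ((hK t ht).mul ((hΓd t ht0).const_sub (1 / π)))
    refine this.congr_deriv ?_
    have e : 4 * α * t * ((1 / π - ∫ x in (0 : ℝ)..t, G x) / (4 * α * t)) = 1 / π - Γ t := by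
      simp only [Γ]; field_simp
    simp only [id, Pi.mul_apply]
    linear_combination (-G t) * hode t ht - K₁ t * e
  have hWconst : ∀ t, a < t → W t = W a := by
    intro t ht
    obtain ⟨x, hx, hxe⟩ := exists_hasDerivAt_eq_slope W (fun _ => 0) ht
      (hWc.mono Icc_subset_Ici_self) (fun x hx => hWd x hx.1)
    rw [eq_comm, div_eq_zero_iff] at hxe
    rcases hxe with h | h <;> linarith
  have hWa : W a = 0 := by
    by_contra hne
    have hpos' : 0 < |W a| := abs_pos.2 hne
    have h1 : ∀ᶠ t in atTop, |4 * α * K₁ t| < |W a| / 2 := by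
      have : Tendsto (fun t => |4 * α * K₁ t|) atTop (nhds 0) := by
        simpa using (hK₁lim.const_mul (4 * α)).abs
      exact this.eventually (gt_mem_nhds (by positivity))
    have h2 : ∀ᶠ t in atTop, |K t * (1 / π - Γ t)| < |W a| / 2 := by
      have : Tendsto (fun t => |K t * (1 / π - Γ t)|) atTop (nhds 0) := by
        simpa using (hKlim.mul (hΓlim.const_sub (1 / π))).abs
      exact this.eventually (gt_mem_nhds (by positivity))
    obtain ⟨t, ht, ⟨h1, h2⟩, hta⟩ := ((frequently_mul_lt_of_integrableOn_Ioi hGi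
      one_pos).and_eventually ((h1.and h2).and (eventually_gt_atTop a))).exists
    have ht0 : 0 < t * G t := mul_pos (ha.trans hta) (hpos t (ha.trans hta))
    have h3 : |4 * α * (t * (K₁ t * G t))| ≤ |4 * α * K₁ t| := by
      rw [show 4 * α * (t * (K₁ t * G t)) = 4 * α * K₁ t * (t * G t) by ring, abs_mul,
        abs_of_pos ht0]
      exact mul_le_of_le_one_right (abs_nonneg _) ht.le
    have h4 : |W a| ≤ |4 * α * (t * (K₁ t * G t))| + |K t * (1 / π - Γ t)| := by
      rw [← hWconst t hta]; exact abs_add_le _ _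
    linarith
  have hsplit : ∫ x in Ioi a, G x = 1 / π - Γ a := by
    have := intervalIntegral.integral_interval_add_Ioi (μ := volume) (f := G) (a := 0) (b := a)
      hGi (hGi.mono_set (Ioi_subset_Ioi ha.le))
    rw [hmass] at this
    simp only [Γ]; linarith
  rw [hsplit]
  simp only [W] at hWa
  linarith

theorem hasFDerivAt_sq_add_sq (x : ℝ × ℝ) :
    HasFDerivAt (fun y : ℝ × ℝ => y.1 ^ 2 + y.2 ^ 2)
      ((2 * x.1) • ContinuousLinearMap.fst ℝ ℝ ℝ + (2 * x.2) • ContinuousLinearMap.snd ℝ ℝ ℝ)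
      x := by
  have := ((hasFDerivAt_fst (𝕜 := ℝ) (p := x)).pow 2).add
    ((hasFDerivAt_snd (𝕜 := ℝ) (p := x)).pow 2)
  refine this.congr_fderiv ?_
  ext <;> simp

theorem lap_comp_sq_add_sq {F : ℝ × ℝ → ℝ} {k k₁ k₂ : ℝ → ℝ} {U : Set ℝ} (hU : IsOpen U)
    (hk : ∀ s ∈ U, HasDerivAt k (k₁ s) s) (hk₁ : ∀ s ∈ U, HasDerivAt k₁ (k₂ s) s)
    (hF : ∀ y : ℝ × ℝ, y.1 ^ 2 + y.2 ^ 2 ∈ U → F y = k (y.1 ^ 2 + y.2 ^ 2))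
    {x : ℝ × ℝ} (hx : x.1 ^ 2 + x.2 ^ 2 ∈ U) :
    lap F x = 4 * (x.1 ^ 2 + x.2 ^ 2) * k₂ (x.1 ^ 2 + x.2 ^ 2) + 4 * k₁ (x.1 ^ 2 + x.2 ^ 2) := by
  have hV : IsOpen {y : ℝ × ℝ | y.1 ^ 2 + y.2 ^ 2 ∈ U} :=
    hU.preimage (f := fun y : ℝ × ℝ => y.1 ^ 2 + y.2 ^ 2) (by fun_prop)
  have hfd : ∀ y : ℝ × ℝ, y.1 ^ 2 + y.2 ^ 2 ∈ U → HasFDerivAt F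
      (k₁ (y.1 ^ 2 + y.2 ^ 2) • ((2 * y.1) • ContinuousLinearMap.fst ℝ ℝ ℝ +
        (2 * y.2) • ContinuousLinearMap.snd ℝ ℝ ℝ)) y := by
    intro y hy
    refine ((hk _ hy).comp_hasFDerivAt y (hasFDerivAt_sq_add_sq y)).congr_of_eventuallyEq ?_
    filter_upwards [hV.mem_nhds hy] with z hz using hF z hz
  have h1 : pd1 F =ᶠ[nhds x] fun y => k₁ (y.1 ^ 2 + y.2 ^ 2) * (2 * y.1) := by
    filter_upwards [hV.mem_nhds hx] with y hy
    rw [pd1, (hfd y hy).fderiv]; simp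
  have h2 : pd2 F =ᶠ[nhds x] fun y => k₁ (y.1 ^ 2 + y.2 ^ 2) * (2 * y.2) := by
    filter_upwards [hV.mem_nhds hx] with y hy
    rw [pd2, (hfd y hy).fderiv]; simp
  have hk₁x := (hk₁ _ hx).comp_hasFDerivAt x (hasFDerivAt_sq_add_sq x)
  have h1' := hk₁x.mul ((hasFDerivAt_fst (𝕜 := ℝ) (p := x)).const_mul 2)
  have h2' := hk₁x.mul ((hasFDerivAt_snd (𝕜 := ℝ) (p := x)).const_mul 2)
  have e1 := (h1'.congr_of_eventuallyEq h1).fderiv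
  have e2 := (h2'.congr_of_eventuallyEq h2).fderiv
  rw [lap, pd1, pd2, e1, e2]
  simp
  ring

theorem integral_comp_sq_add_sq (v : ℝ → ℝ) :
    ∫ y : ℝ × ℝ, v (y.1 ^ 2 + y.2 ^ 2) = π * ∫ s in Ioi 0, v s := by
  rw [← integral_comp_polarCoord_symm, polarCoord_target]
  have e : ∀ p : ℝ × ℝ, p.1 • v ((polarCoord.symm p).1 ^ 2 + (polarCoord.symm p).2 ^ 2) =
      (p.1 * v (p.1 ^ 2)) * 1 := by
    intro p
    rw [polarCoord_symm_apply]
    have : (p.1 * Real.cos p.2) ^ 2 + (p.1 * Real.sin p.2) ^ 2 = p.1 ^ 2 := by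
      linear_combination p.1 ^ 2 * Real.cos_sq_add_sin_sq p.2
    simp [this]
  simp only [e]
  rw [Measure.volume_eq_prod,
    setIntegral_prod_mul (fun r : ℝ => r * v (r ^ 2)) (fun _ : ℝ => (1 : ℝ)),
    ← integral_comp_rpow_Ioi_of_pos (g := v) (p := 2) two_pos]
  have e2 : ∀ x : ℝ, (2 * x ^ ((2 : ℝ) - 1)) • v (x ^ (2 : ℝ)) = 2 * (x * v (x ^ 2)) := by
    intro x
    norm_num [smul_eq_mul, mul_assoc]
  simp only [e2, integral_const_mul]
  have e3 : ∫ _ in Ioo (-π) π, (1 : ℝ) = 2 * π := by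
    simp [Real.pi_pos.le]; ring
  rw [e3]; ring

theorem norm2_sqrt_zero (x : ℝ × ℝ) : norm2 (√(x.1 ^ 2 + x.2 ^ 2), 0) = norm2 x := by
  have : 0 ≤ x.1 ^ 2 + x.2 ^ 2 := by positivity
  simp [norm2, Real.sq_sqrt this]

theorem norm2_sqrt_zero_eq (s : ℝ) : norm2 (√s, 0) = √s := by
  simp [norm2, Real.sqrt_sq]

theorem radial_weak_form {GA : ℝ × ℝ → ℝ} {α : ℝ}
    (hGrad : ∀ x y : ℝ × ℝ, norm2 x = norm2 y → GA x = GA y)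
    (hfund : ∀ φ : ℝ × ℝ → ℝ, ContDiff ℝ (⊤ : ℕ∞) φ → HasCompactSupport φ →
      ∀ x : ℝ × ℝ, φ x = ∫ y : ℝ × ℝ, GA (x - y) * (φ y - α * lap φ y))
    {h u : ℝ → ℝ} (hh : ∀ s, HasDerivAt h (u s) s) (hu : ContDiff ℝ ∞ u)
    {M : ℝ} (hM : ∀ s, M ≤ s → h s = 0) :
    h 0 = π * ∫ s in Ioi 0, GA (√s, 0) * (h s - 4 * α * (s * deriv u s + u s)) := by
  have hh1 : ContDiff ℝ ∞ h := by
    rw [contDiff_infty_iff_deriv]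
    exact ⟨fun s => (hh s).differentiableAt, by rwa [funext fun s => (hh s).deriv]⟩
  let φ : ℝ × ℝ → ℝ := fun y => h (y.1 ^ 2 + y.2 ^ 2)
  have hφ1 : ContDiff ℝ ∞ φ :=
    hh1.comp ((contDiff_fst.pow 2).add (contDiff_snd.pow 2))
  have hφ2 : HasCompactSupport φ := by
    refine HasCompactSupport.intro (isCompact_Icc (a := ((-(|M| + 1), -(|M| + 1)) : ℝ × ℝ))
      (b := (|M| + 1, |M| + 1))) fun x hx => ?_
    apply hM
    by_contra hlt
    push Not at hlt
    apply hx
    have hm := le_abs_self M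
    have hm0 := abs_nonneg M
    have h1 : |x.1| ≤ |M| + 1 := abs_le_of_sq_le_sq (by nlinarith [sq_nonneg x.2]) (by linarith)
    have h2 : |x.2| ≤ |M| + 1 := abs_le_of_sq_le_sq (by nlinarith [sq_nonneg x.1]) (by linarith)
    rw [abs_le] at h1 h2
    exact ⟨⟨h1.1, h2.1⟩, ⟨h1.2, h2.2⟩⟩
  have := hfund φ hφ1 hφ2 0
  have e0 : φ 0 = h 0 := by simp [φ]
  rw [← e0, this, ← integral_comp_sq_add_sq]
  congr 1
  funext y
  rw [lap_comp_sq_add_sq (F := φ) isOpen_univ (fun s _ => hh s)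
    (fun s _ => (hu.differentiable (by simp)).differentiableAt.hasDerivAt)
    (fun y _ => rfl) (mem_univ _),
    hGrad (0 - y) (√(y.1 ^ 2 + y.2 ^ 2), 0) (by rw [norm2_sqrt_zero]; simp [norm2])]
  simp only [φ]
  ring

/-- If `F₀` is radially symmetric, `C²` on the closed exterior of the disk of radius `ε`,
decays at infinity together with its derivative, satisfies `(1 − αΔ)F₀ = 0` outside, with
interior normal derivative `A` and boundary value `B` on `{|x| = ε}`, and `G_α` is the kernel
of `(1 − αΔ)^{-1}` on `ℝ²`, then
`B = −αA (∫_{|x|=ε} G_α ds) / (∫_{|x|>ε} G_α dx)`. -/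
theorem stmt17 (α ε A B : ℝ) (hα : 0 < α) (hε : 0 < ε)
    (F₀ GA : ℝ × ℝ → ℝ)
    (hF₀C : ContDiffOn ℝ 2 F₀ {x : ℝ × ℝ | ε ≤ norm2 x})
    (hrad : ∀ x y : ℝ × ℝ, ε ≤ norm2 x → norm2 x = norm2 y → F₀ x = F₀ y)
    (hpde : ∀ x : ℝ × ℝ, ε < norm2 x → F₀ x - α * lap F₀ x = 0)
    (hNeu : ∀ x : ℝ × ℝ, norm2 x = ε →
      fderivWithin ℝ F₀ {y : ℝ × ℝ | ε ≤ norm2 y} x (ε⁻¹ • x) = A)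
    (hDir : ∀ x : ℝ × ℝ, norm2 x = ε → F₀ x = B)
    (hdecay : Tendsto (fun x : ℝ × ℝ => |F₀ x| + ‖fderiv ℝ F₀ x‖)
      (cocompact (ℝ × ℝ)) (nhds 0))
    (hGint : Integrable GA)
    (hGpos : ∀ x : ℝ × ℝ, x ≠ 0 → 0 < GA x)
    (hGcont : ContinuousOn GA {x : ℝ × ℝ | x ≠ 0})
    (hGrad : ∀ x y : ℝ × ℝ, norm2 x = norm2 y → GA x = GA y)
    (hfund : ∀ φ : ℝ × ℝ → ℝ, ContDiff ℝ (⊤ : ℕ∞) φ → HasCompactSupport φ →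
      ∀ x : ℝ × ℝ, φ x = ∫ y : ℝ × ℝ, GA (x - y) * (φ y - α * lap φ y)) :
    B = -α * A * (∫ θ in (0:ℝ)..(2 * π), GA (ε * Real.cos θ, ε * Real.sin θ) * ε) /
        (∫ y in {x : ℝ × ℝ | ε < norm2 x}, GA y) := by
  set a : ℝ := ε ^ 2 with ha_def
  have ha : 0 < a := by positivity
  have hsa : √a = ε := Real.sqrt_sq hε.le
  have hne : ∀ s : ℝ, 0 < s → ((√s, 0) : ℝ × ℝ) ≠ 0 := fun s hs h =>
    (Real.sqrt_pos.2 hs).ne' (congrArg Prod.fst h)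
  let G : ℝ → ℝ := fun s => GA (√s, 0)
  have hGA : ∀ y : ℝ × ℝ, GA y = G (y.1 ^ 2 + y.2 ^ 2) := fun y =>
    hGrad _ _ (norm2_sqrt_zero y).symm
  have hGpos' : ∀ s, 0 < s → 0 < G s := fun s hs => hGpos _ (hne s hs)
  have hGc : ContinuousOn G (Ioi 0) :=
    hGcont.comp (f := fun s : ℝ => ((√s, 0) : ℝ × ℝ)) (by fun_prop) fun s hs => hne s hs
  have hGi : IntegrableOn G (Ioi 0) := by
    have hGApos : 0 < ∫ y, GA y := by
      have hae : ∀ᵐ y : ℝ × ℝ, y ≠ 0 := by simp [ae_iff]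
      rw [integral_pos_iff_support_of_nonneg_ae
        (by filter_upwards [hae] with y hy using (hGpos y hy).le) hGint]
      have : Function.support GA =ᵐ[volume] univ := by
        filter_upwards [hae] with y hy
        exact eq_true (hGpos y hy).ne'
      rw [measure_congr this]
      simp
    simp only [hGA, integral_comp_sq_add_sq] at hGApos
    by_contra hcon
    rw [integral_undef hcon] at hGApos
    simp at hGApos
  have hd : ∀ t, 0 < t →
      HasDerivAt G (-((1 / π - ∫ x in (0 : ℝ)..t, G x) / (4 * α * t))) t := fun t ht =>
    kernel_hasDerivAt hα hGi hGc
      (fun h u hh hu M hM => radial_weak_form hGrad hfund hh hu hM) ht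
  let K : ℝ → ℝ := fun s => F₀ (√s, 0)
  have hmaps : MapsTo (fun s : ℝ => ((√s, 0) : ℝ × ℝ)) (Ici a) {x | ε ≤ norm2 x} := by
    intro s hs
    rw [mem_ofPred_eq, norm2_sqrt_zero_eq, ← hsa]
    exact Real.sqrt_le_sqrt hs
  have hKC : ContDiffOn ℝ 2 K (Ici a) := by
    refine hF₀C.comp (f := fun s : ℝ => ((√s, 0) : ℝ × ℝ)) (fun s hs => ?_) hmaps
    exact ((Real.contDiffAt_sqrt (ha.trans_le hs).ne').prodMk contDiffAt_const).contDiffWithinAt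
  let K₁ : ℝ → ℝ := derivWithin K (Ici a)
  have hK₁C : ContDiffOn ℝ 1 K₁ (Ici a) := hKC.derivWithin (uniqueDiffOn_Ici a) (by norm_num)
  have hK : ∀ t, a < t → HasDerivAt K (K₁ t) t := fun t ht =>
    ((hKC.differentiableOn (by norm_num) t ht.le).hasDerivWithinAt).hasDerivAt (Ici_mem_nhds ht)
  have hK₁ : ∀ t, a < t → HasDerivAt K₁ (deriv K₁ t) t := fun t ht =>
    ((hK₁C.differentiableOn (by norm_num) t ht.le).differentiableAt (Ici_mem_nhds ht)).hasDerivAt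
  have hode : ∀ t, a < t → K t - α * (4 * t * deriv K₁ t + 4 * K₁ t) = 0 := by
    intro t ht
    have ht0 : 0 ≤ t := (ha.trans ht).le
    have := hpde (√t, 0) (by
      rw [norm2_sqrt_zero_eq, ← hsa]; exact Real.sqrt_lt_sqrt ha.le ht)
    have hq : (√t) ^ 2 + (0 : ℝ) ^ 2 = t := by rw [Real.sq_sqrt ht0]; ring
    rw [lap_comp_sq_add_sq (F := F₀) (U := Ioi a) isOpen_Ioi hK hK₁ (fun y hy => by
        refine hrad _ _ ?_ (norm2_sqrt_zero y).symm
        rw [norm2, ← hsa]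
        exact Real.sqrt_le_sqrt (le_of_lt hy)) (by simpa only [hq, mem_Ioi] using ht)] at this
    simpa only [hq] using this
  have hcurve : Tendsto (fun s : ℝ => ((√s, 0) : ℝ × ℝ)) atTop (cocompact (ℝ × ℝ)) := by
    rw [← Metric.cobounded_eq_cocompact, ← tendsto_norm_atTop_iff_cobounded]
    refine tendsto_atTop_mono (fun s => ?_) Real.tendsto_sqrt_atTop
    exact (le_abs_self _).trans (norm_fst_le ((√s, 0) : ℝ × ℝ))
  have hdec := hdecay.comp hcurve
  have hKlim : Tendsto K atTop (nhds 0) := by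
    refine squeeze_zero_norm (fun s => ?_) hdec
    exact le_add_of_nonneg_right (norm_nonneg _)
  have hK₁lim : Tendsto K₁ atTop (nhds 0) := by
    have hlim := hdec.mul_const (1 / (2 * ε))
    rw [zero_mul] at hlim
    refine squeeze_zero_norm' ?_ hlim
    filter_upwards [eventually_gt_atTop a] with t ht
    have ht0 : 0 < t := ha.trans ht
    have hεt : ε ≤ √t := by rw [← hsa]; exact Real.sqrt_le_sqrt ht.le
    have hnhds : {x : ℝ × ℝ | ε ≤ norm2 x} ∈ nhds ((√t, 0) : ℝ × ℝ) := by
      have hc : Continuous norm2 := by unfold norm2; fun_prop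
      have : ε < norm2 (√t, 0) := by
        rw [norm2_sqrt_zero_eq, ← hsa]; exact Real.sqrt_lt_sqrt ha.le ht
      filter_upwards [(isOpen_Ioi.preimage hc).mem_nhds this] with y hy using le_of_lt hy
    have hFd : HasFDerivAt F₀ (fderiv ℝ F₀ (√t, 0)) (√t, 0) :=
      ((hF₀C.contDiffAt hnhds).differentiableAt (by norm_num)).hasFDerivAt
    have hcd : HasDerivAt (fun s : ℝ => ((√s, 0) : ℝ × ℝ)) (1 / (2 * √t), 0) t :=
      (Real.hasDerivAt_sqrt ht0.ne').prodMk (hasDerivAt_const t (0 : ℝ))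
    rw [(hK t ht).unique (hFd.comp_hasDerivAt t hcd)]
    refine (ContinuousLinearMap.le_opNorm _ _).trans ?_
    refine mul_le_mul (le_add_of_nonneg_left (abs_nonneg _)) ?_ (norm_nonneg _)
      (add_nonneg (abs_nonneg _) (norm_nonneg _))
    rw [Prod.norm_mk, norm_zero, max_eq_left (norm_nonneg _),
      Real.norm_of_nonneg (by positivity)]
    gcongr
  have hKa : K a = B := hDir _ (by rw [norm2_sqrt_zero_eq, hsa])
  have hK₁a : K₁ a = A / (2 * ε) := by
    have hFd : HasFDerivWithinAt F₀ (fderivWithin ℝ F₀ {y : ℝ × ℝ | ε ≤ norm2 y} (√a, 0))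
        {y : ℝ × ℝ | ε ≤ norm2 y} (√a, 0) :=
      (hF₀C.differentiableOn (by norm_num) _ (hmaps self_mem_Ici)).hasFDerivWithinAt
    have hcd : HasDerivWithinAt (fun s : ℝ => ((√s, 0) : ℝ × ℝ)) (1 / (2 * √a), 0) (Ici a) a :=
      ((Real.hasDerivAt_sqrt ha.ne').prodMk (hasDerivAt_const a (0 : ℝ))).hasDerivWithinAt
    have h1 := (HasFDerivWithinAt.comp_hasDerivWithinAt a hFd hcd hmaps).derivWithin
      (uniqueDiffOn_Ici a a self_mem_Ici)
    have h2 := hNeu (√a, 0) (by rw [norm2_sqrt_zero_eq, hsa])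
    have e : ((1 / (2 * √a), 0) : ℝ × ℝ) = (1 / (2 * ε)) • (ε⁻¹ • ((√a, 0) : ℝ × ℝ)) := by
      rw [hsa]; ext <;> simp [hε.ne']
    rw [e, map_smul, h2, smul_eq_mul] at h1
    rw [show K₁ a = 1 / (2 * ε) * A from h1]
    ring
  have hid := boundary_identity hα ha hGi hGpos' hd hKC.continuousOn hK₁C.continuousOn hK hK₁
    hode hKlim hK₁lim
  have hcirc : ∫ θ in (0 : ℝ)..(2 * π), GA (ε * Real.cos θ, ε * Real.sin θ) * ε =
      2 * π * (G a * ε) := by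
    have : ∀ θ : ℝ, GA (ε * Real.cos θ, ε * Real.sin θ) = G a := fun θ => by
      rw [hGA]
      congr 1
      simp only
      linear_combination ε ^ 2 * Real.cos_sq_add_sin_sq θ
    simp [this]
    ring
  have hext : ∫ y in {x : ℝ × ℝ | ε < norm2 x}, GA y = π * ∫ s in Ioi a, G s := by
    have hmeas : MeasurableSet {x : ℝ × ℝ | ε < norm2 x} := by
      have hc : Continuous norm2 := by unfold norm2; fun_prop
      exact (isOpen_Ioi.preimage hc).measurableSet
    have hind : {x : ℝ × ℝ | ε < norm2 x}.indicator GA =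
        fun y => (Ioi a).indicator G (y.1 ^ 2 + y.2 ^ 2) := by
      funext y
      have hiff : ε < norm2 y ↔ a < y.1 ^ 2 + y.2 ^ 2 := Real.lt_sqrt hε.le
      by_cases hy : ε < norm2 y
      · rw [indicator_of_mem (by exact hy), indicator_of_mem (by exact hiff.1 hy), hGA]
      · rw [indicator_of_notMem (by exact hy),
          indicator_of_notMem (by exact fun h => hy (hiff.2 h))]
    rw [← integral_indicator hmeas, hind, integral_comp_sq_add_sq,
      setIntegral_indicator measurableSet_Ioi, inter_eq_right.2 (Ioi_subset_Ioi ha.le)]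
  have hIpos : 0 < ∫ s in Ioi a, G s := by
    have hsub : Ioi a ⊆ Function.support G := fun s hs => (hGpos' s (ha.trans hs)).ne'
    rw [setIntegral_pos_iff_support_of_nonneg_ae _ (hGi.mono_set (Ioi_subset_Ioi ha.le)),
      inter_eq_right.2 hsub]
    · simp
    · rw [EventuallyLE, ae_restrict_iff' measurableSet_Ioi]
      exact Eventually.of_forall fun s hs => (hGpos' s (ha.trans hs)).le
  rw [hKa, hK₁a] at hid
  rw [hcirc, hext, eq_div_iff (by positivity)]
  have hid' : 2 * α * ε * A * G a = -(B * ∫ x in Ioi a, G x) := by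
    rw [← hid, ha_def]; field_simp; ring
  linear_combination π * hid'
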